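/- arXiv:1401.5037 — 8 statements merged into one kernel-verified Lean document; each statement's English description precedes it below -/
import Mathlib

section
/- Let m ≥ 2, let u ∈ [m] and T = [m] \ {u}. A vector (R_i)_{i∈T} ∈ ℝ^T satisfies Σ_{i∈A∩T} R_i ≥ H(X_{A∩T} | X_{A^c}) for every proper subset A ⊊ [m] with A ∩ T ≠ ∅ if and only if it satisfies both (i) Σ_{i∈B} R_i ≥ H(X_B | X_{T\B}) for every nonempty proper subset B ⊊ T, and (ii) Σ_{i∈T} R_i ≥ H(X_T | X_u). (Lemma 1: simplified description of the rate region R_T when |T| = m−1.) -/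
open MeasureTheory Finset

/-- Shannon entropy (natural log) of a random variable with values in a finite set. -/
noncomputable def shannonEntropy {Ω : Type*} [MeasurableSpace Ω] (μ : Measure Ω)
    {S : Type*} [Fintype S] (Y : Ω → S) : ℝ :=
  ∑ s : S, Real.negMulLog (μ (Y ⁻¹' {s})).toReal

/-- `HX μ X A` is the Shannon entropy of the tuple `X_A = (X_i : i ∈ A)`. -/
noncomputable def HX {m : ℕ} {Ω : Type*} [MeasurableSpace Ω] (μ : Measure Ω)
    {𝒳 : Fin m → Type*} [∀ i, Fintype (𝒳 i)] (X : ∀ i, Ω → 𝒳 i)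
    (A : Finset (Fin m)) : ℝ :=
  shannonEntropy μ (fun ω => fun i : A => X i ω)

/-- Conditional entropy `H(X_A | X_B)`. -/
noncomputable def condEnt {m : ℕ} {Ω : Type*} [MeasurableSpace Ω] (μ : Measure Ω)
    {𝒳 : Fin m → Type*} [∀ i, Fintype (𝒳 i)] (X : ∀ i, Ω → 𝒳 i)
    (A B : Finset (Fin m)) : ℝ :=
  HX μ X (A ∪ B) - HX μ X B

theorem aux_inj {Ω : Type*} [MeasurableSpace Ω] (μ : Measure Ω)
    {S S' : Type*} [Fintype S] [Fintype S'] (Y : Ω → S) (f : S → S')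
    (hf : Function.Injective f) :
    shannonEntropy μ (fun ω => f (Y ω)) = shannonEntropy μ Y := by
  classical
  unfold shannonEntropy
  symm
  apply Finset.sum_of_injOn f hf.injOn (by simp)
  · intro s _ hs
    have : (fun ω => f (Y ω)) ⁻¹' {s} = ∅ := by
      ext ω
      simp only [Set.mem_preimage, Set.mem_singleton_iff, Set.mem_empty_iff_false, iff_false]
      intro h
      exact hs ⟨Y ω, by simp, h⟩
    rw [this]; simp
  · intro s _
    congr 3
    ext ω
    simp [hf.eq_iff]

theorem aux_fin {α β γ : Type*} [Fintype α] [Fintype β] [Fintype γ]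
    (p : α → β → γ → ℝ) (hp : ∀ a b c, 0 ≤ p a b c)
    (q : α → β → ℝ) (hq : ∀ a b, q a b = ∑ c, p a b c)
    (r : α → γ → ℝ) (hr : ∀ a c, r a c = ∑ b, p a b c)
    (s : α → ℝ) (hs : ∀ a, s a = ∑ b, q a b) (hs' : ∀ a, s a = ∑ c, r a c) :
    ∑ a, ∑ b, ∑ c, Real.negMulLog (p a b c) + ∑ a, Real.negMulLog (s a) ≤
      ∑ a, ∑ b, Real.negMulLog (q a b) + ∑ a, ∑ c, Real.negMulLog (r a c) := by
  have hq0 : ∀ a b, 0 ≤ q a b := fun a b => by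
    rw [hq]; exact Finset.sum_nonneg fun c _ => hp a b c
  have hr0 : ∀ a c, 0 ≤ r a c := fun a c => by
    rw [hr]; exact Finset.sum_nonneg fun b _ => hp a b c
  have hs0 : ∀ a, 0 ≤ s a := fun a => by
    rw [hs]; exact Finset.sum_nonneg fun b _ => hq0 a b
  have key : ∀ a b c, p a b c * Real.log (q a b) + p a b c * Real.log (r a c)
      - p a b c * Real.log (p a b c) - p a b c * Real.log (s a)
      ≤ q a b * r a c / s a - p a b c := by
    intro a b c
    rcases (hp a b c).eq_or_lt with h | h
    · rw [← h]
      have := div_nonneg (mul_nonneg (hq0 a b) (hr0 a c)) (hs0 a)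
      simpa using this
    · have h1 : 0 < q a b := lt_of_lt_of_le h (by
        rw [hq]; exact Finset.single_le_sum (fun c _ => hp a b c) (Finset.mem_univ c))
      have h2 : 0 < r a c := lt_of_lt_of_le h (by
        rw [hr]; exact Finset.single_le_sum (f := fun b => p a b c)
          (fun b _ => hp a b c) (Finset.mem_univ b))
      have h3 : 0 < s a := lt_of_lt_of_le h1 (by
        rw [hs]; exact Finset.single_le_sum (fun b _ => hq0 a b) (Finset.mem_univ b))
      have := Real.log_le_sub_one_of_pos
        (show 0 < q a b * r a c / (p a b c * s a) by positivity)
      rw [Real.log_div (by positivity) (by positivity), Real.log_mul h1.ne' h2.ne',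
        Real.log_mul h.ne' h3.ne'] at this
      have h4 := mul_le_mul_of_nonneg_left this h.le
      have h5 : p a b c * (q a b * r a c / (p a b c * s a) - 1)
          = q a b * r a c / s a - p a b c := by
        field_simp
      rw [h5] at h4
      linarith
  have main : ∀ a, ∑ b, ∑ c, Real.negMulLog (p a b c) + Real.negMulLog (s a) ≤
      ∑ b, Real.negMulLog (q a b) + ∑ c, Real.negMulLog (r a c) := by
    intro a
    have hsum := Finset.sum_le_sum fun b (_ : b ∈ Finset.univ) =>
      Finset.sum_le_sum fun c (_ : c ∈ Finset.univ) => key a b c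
    simp only [Finset.sum_sub_distrib, Finset.sum_add_distrib] at hsum
    have e1 : ∑ b, ∑ c, p a b c * Real.log (q a b) = ∑ b, q a b * Real.log (q a b) := by
      refine Finset.sum_congr rfl fun b _ => ?_
      rw [← Finset.sum_mul, ← hq]
    have e2 : ∑ b, ∑ c, p a b c * Real.log (r a c) = ∑ c, r a c * Real.log (r a c) := by
      rw [Finset.sum_comm]
      refine Finset.sum_congr rfl fun c _ => ?_
      rw [← Finset.sum_mul, ← hr]
    have e0 : ∑ b, ∑ c, p a b c = s a := by
      rw [hs]; exact Finset.sum_congr rfl fun b _ => (hq a b).symm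
    have e3 : ∑ b, ∑ c, p a b c * Real.log (s a) = s a * Real.log (s a) := by
      simp only [← Finset.sum_mul]
      rw [e0]
    have e4 : ∑ b, ∑ c, q a b * r a c / s a = s a := by
      simp only [← Finset.sum_div, ← Finset.mul_sum, ← hs', ← Finset.sum_mul, ← hs]
      exact mul_self_div_self _
    rw [e1, e2, e3, e4, e0] at hsum
    simp only [Real.negMulLog, neg_mul, Finset.sum_neg_distrib]
    linarith
  have := Finset.sum_le_sum fun a (_ : a ∈ Finset.univ) => main a
  simpa only [Finset.sum_add_distrib] using this

theorem aux_marg {Ω : Type*} [MeasurableSpace Ω] (μ : Measure Ω) [IsProbabilityMeasure μ]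
    {S : Type*} [Fintype S] [MeasurableSpace S] [MeasurableSingletonClass S]
    (Z : Ω → S) (hZ : Measurable Z) (s : Set Ω) :
    (μ s).toReal = ∑ b, (μ (s ∩ Z ⁻¹' {b})).toReal := by
  have h := sum_measure_preimage_singleton (μ := μ.restrict s) (Finset.univ : Finset S)
    (f := Z) (fun y _ => hZ (measurableSet_singleton y))
  rw [← ENNReal.toReal_sum (fun b _ => measure_ne_top _ _)]
  congr 1
  simp only [Finset.coe_univ, Set.preimage_univ, Measure.restrict_apply_univ] at h
  rw [← h]
  refine Finset.sum_congr rfl fun b _ => ?_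
  rw [Measure.restrict_apply (hZ (measurableSet_singleton b)), Set.inter_comm]

theorem aux_submod {Ω : Type*} [MeasurableSpace Ω] (μ : Measure Ω) [IsProbabilityMeasure μ]
    {α β γ : Type*} [Fintype α] [Fintype β] [Fintype γ]
    [MeasurableSpace β] [MeasurableSingletonClass β]
    [MeasurableSpace γ] [MeasurableSingletonClass γ]
    (Y : Ω → α) (Z : Ω → β) (W : Ω → γ) (hZ : Measurable Z) (hW : Measurable W) :
    shannonEntropy μ (fun ω => (Y ω, Z ω, W ω)) + shannonEntropy μ Y ≤
      shannonEntropy μ (fun ω => (Y ω, Z ω)) + shannonEntropy μ (fun ω => (Y ω, W ω)) := by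
  have h := aux_fin (fun a b c => (μ (Y ⁻¹' {a} ∩ Z ⁻¹' {b} ∩ W ⁻¹' {c})).toReal)
    (fun _ _ _ => ENNReal.toReal_nonneg)
    (fun a b => (μ (Y ⁻¹' {a} ∩ Z ⁻¹' {b})).toReal)
    (fun a b => aux_marg μ W hW _)
    (fun a c => (μ (Y ⁻¹' {a} ∩ W ⁻¹' {c})).toReal)
    (fun a c => by
      rw [aux_marg μ Z hZ]
      simp only [Set.inter_right_comm])
    (fun a => (μ (Y ⁻¹' {a})).toReal)
    (fun a => aux_marg μ Z hZ _) (fun a => aux_marg μ W hW _)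
  unfold shannonEntropy
  simp only [Fintype.sum_prod_type]
  convert h using 9 <;> (ext ω; simp [and_assoc])

theorem aux_HX {m : ℕ} {Ω : Type*} [MeasurableSpace Ω] (μ : Measure Ω)
    [IsProbabilityMeasure μ]
    {𝒳 : Fin m → Type*} [∀ i, Fintype (𝒳 i)] [∀ i, MeasurableSpace (𝒳 i)]
    [∀ i, MeasurableSingletonClass (𝒳 i)]
    (X : ∀ i, Ω → 𝒳 i) (hX : ∀ i, Measurable (X i)) (C B D : Finset (Fin m)) :
    HX μ X (C ∪ (B ∪ D)) + HX μ X C ≤ HX μ X (C ∪ B) + HX μ X (C ∪ D) := by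
  have pair : ∀ E F : Finset (Fin m), HX μ X (E ∪ F) =
      shannonEntropy μ (fun ω => ((fun i : E => X i ω), (fun i : F => X i ω))) := by
    intro E F
    refine (aux_inj μ (fun ω => fun i : (E ∪ F : Finset (Fin m)) => X i ω)
      (fun x => ((fun i : E => x ⟨i, Finset.mem_union_left _ i.2⟩),
        (fun i : F => x ⟨i, Finset.mem_union_right _ i.2⟩))) ?_).symm
    intro x y hxy
    obtain ⟨h1, h2⟩ := Prod.mk.inj hxy
    ext ⟨i, hi⟩
    rcases Finset.mem_union.1 hi with h | h
    · exact congrFun h1 ⟨i, h⟩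
    · exact congrFun h2 ⟨i, h⟩
  have triple : HX μ X (C ∪ (B ∪ D)) = shannonEntropy μ
      (fun ω => ((fun i : C => X i ω), (fun i : B => X i ω), (fun i : D => X i ω))) := by
    refine (aux_inj μ (fun ω => fun i : (C ∪ (B ∪ D) : Finset (Fin m)) => X i ω)
      (fun x => ((fun i : C => x ⟨i, Finset.mem_union_left _ i.2⟩),
        (fun i : B => x ⟨i, Finset.mem_union_right _ (Finset.mem_union_left _ i.2)⟩),
        (fun i : D => x ⟨i, Finset.mem_union_right _ (Finset.mem_union_right _ i.2)⟩))) ?_).symm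
    intro x y hxy
    obtain ⟨h1, h23⟩ := Prod.mk.inj hxy
    obtain ⟨h2, h3⟩ := Prod.mk.inj h23
    ext ⟨i, hi⟩
    rcases Finset.mem_union.1 hi with h | h
    · exact congrFun h1 ⟨i, h⟩
    rcases Finset.mem_union.1 h with h | h
    · exact congrFun h2 ⟨i, h⟩
    · exact congrFun h3 ⟨i, h⟩
  rw [triple, pair, pair]
  exact aux_submod μ _ _ _ (measurable_pi_lambda _ fun i => hX i)
    (measurable_pi_lambda _ fun i => hX i)

/-- Lemma 1: for `T = [m] \ {u}`, the defining constraints of the rate region `R_T`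
are equivalent to the constraints (i) and (ii). -/
theorem stmt0 {m : ℕ} (hm : 2 ≤ m) {Ω : Type*} [MeasurableSpace Ω] (μ : Measure Ω)
    [IsProbabilityMeasure μ]
    {𝒳 : Fin m → Type*} [∀ i, Fintype (𝒳 i)] [∀ i, MeasurableSpace (𝒳 i)]
    [∀ i, MeasurableSingletonClass (𝒳 i)]
    (X : ∀ i, Ω → 𝒳 i) (hX : ∀ i, Measurable (X i))
    (u : Fin m) (T : Finset (Fin m)) (hT : T = {u}ᶜ) (R : Fin m → ℝ) :
    (∀ A : Finset (Fin m), A ⊂ Finset.univ → (A ∩ T).Nonempty →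
        ∑ i ∈ A ∩ T, R i ≥ condEnt μ X (A ∩ T) Aᶜ)
      ↔ ((∀ B : Finset (Fin m), B ⊂ T → B.Nonempty →
            ∑ i ∈ B, R i ≥ condEnt μ X B (T \ B)) ∧
          ∑ i ∈ T, R i ≥ condEnt μ X T {u}) := by
  subst hT
  constructor
  · intro h
    refine ⟨fun B hB hne => ?_, ?_⟩
    · have huB : u ∉ B := fun hu => by simpa using hB.1 hu
      have e1 : (insert u B) ∩ {u}ᶜ = B := by
        ext i; by_cases hi : i = u <;> simp [hi, huB]
      have e2 : (insert u B)ᶜ = {u}ᶜ \ B := by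
        ext i; simp
      have := h (insert u B) ?_ (by rwa [e1])
      · rwa [e1, e2] at this
      · rw [Finset.ssubset_univ_iff]
        intro hc
        apply hB.2
        intro i hi
        have : i ∈ insert u B := hc ▸ Finset.mem_univ i
        simp at hi this
        tauto
    · have := h {u}ᶜ ?_ ?_
      · simpa using this
      · rw [Finset.ssubset_univ_iff]
        intro hc
        have : u ∈ ({u}ᶜ : Finset (Fin m)) := hc ▸ Finset.mem_univ u
        simp at this
      · rw [Finset.inter_self, ← Finset.card_pos, Finset.card_compl]
        simp
        omega
  · rintro ⟨h1, h2⟩ A hA hne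
    by_cases hu : u ∈ A
    · have hB : A ∩ {u}ᶜ ⊂ {u}ᶜ := by
        refine ⟨Finset.inter_subset_right, fun hc => hA.ne ?_⟩
        ext i
        by_cases hi : i = u
        · simp [hi, hu]
        · have := hc (show i ∈ ({u}ᶜ : Finset (Fin m)) by simpa using hi)
          simp at this ⊢
          exact this.1
      have := h1 _ hB hne
      have e : ({u}ᶜ : Finset (Fin m)) \ (A ∩ {u}ᶜ) = Aᶜ := by
        ext i; by_cases hi : i = u <;> simp [hi, hu]
      rwa [e] at this
    · have hAT : A ⊆ {u}ᶜ := fun i hi => by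
        simp; rintro rfl; exact hu hi
      have e : A ∩ {u}ᶜ = A := Finset.inter_eq_left.2 hAT
      rw [e] at hne ⊢
      rcases hAT.eq_or_ssubset with rfl | hss
      · simpa using h2
      · refine le_trans ?_ (h1 A hss hne)
        have key := aux_HX μ X hX ({u}ᶜ \ A) A {u}
        unfold condEnt
        have e1 : A ∪ Aᶜ = ({u}ᶜ \ A) ∪ (A ∪ {u}) := by
          ext i; by_cases hi : i = u <;> by_cases hA : i ∈ A <;> simp [hi, hA]
        have e2 : Aᶜ = ({u}ᶜ \ A) ∪ {u} := by
          ext i; by_cases hi : i = u <;> simp [hi, hu]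
        rw [e1, e2, Finset.union_comm A ({u}ᶜ \ A)]
        linarith
end

section
/- Let m ≥ 3 and let T ⊂ [m] with |T| = m−1. Every vector (R_i)_{i∈T} in the rate region R_T satisfies Σ_{i∈T} R_i ≥ (1/(m−2))·Σ_{j∈T} H(X_{T\{j}} | X_j). In particular, R_T^{(min)} := min_{(R_i)∈R_T} Σ_{i∈T} R_i ≥ (1/(m−2))·Σ_{j∈T} H(X_{T\{j}} | X_j). (Lemma 2.) -/
open MeasureTheory Finset

/-- Lemma 2: lower bound on the total rate of any point of the rate region `R_T`,
for `T ⊂ [m]` with `|T| = m - 1`. -/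
theorem stmt1 {m : ℕ} (hm : 3 ≤ m) {Ω : Type*} [MeasurableSpace Ω] (μ : Measure Ω)
    [IsProbabilityMeasure μ]
    {𝒳 : Fin m → Type*} [∀ i, Fintype (𝒳 i)] [∀ i, MeasurableSpace (𝒳 i)]
    [∀ i, MeasurableSingletonClass (𝒳 i)]
    (X : ∀ i, Ω → 𝒳 i) (hX : ∀ i, Measurable (X i))
    (T : Finset (Fin m)) (hT : T ⊂ Finset.univ) (hTcard : T.card = m - 1)
    (R : Fin m → ℝ)
    (hR : ∀ A : Finset (Fin m), A ⊂ Finset.univ → (A ∩ T).Nonempty →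
        ∑ i ∈ A ∩ T, R i ≥ condEnt μ X (A ∩ T) Aᶜ) :
    ∑ i ∈ T, R i ≥ (1 / ((m : ℝ) - 2)) * ∑ j ∈ T, condEnt μ X (T \ {j}) {j} := by
  have key : ∀ j ∈ T, (∑ i ∈ T, R i) - R j ≥ condEnt μ X (T \ {j}) {j} := by
    intro j hj
    have e : ({j} : Finset (Fin m))ᶜ ∩ T = T \ {j} := by
      ext x; simp [and_comm]
    have hsub : ({j} : Finset (Fin m))ᶜ ⊂ Finset.univ := by
      rw [Finset.ssubset_univ_iff]
      intro h
      have := Finset.mem_univ j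
      rw [← h] at this
      simp at this
    have hcard : (T \ {j}).card = T.card - 1 := by
      rw [Finset.sdiff_singleton_eq_erase, Finset.card_erase_of_mem hj]
    have hne : (({j} : Finset (Fin m))ᶜ ∩ T).Nonempty := by
      rw [e, ← Finset.card_pos]
      omega
    have h := hR _ hsub hne
    rw [e, compl_compl] at h
    have hs : ∑ i ∈ T \ {j}, R i = (∑ i ∈ T, R i) - R j := by
      rw [Finset.sdiff_singleton_eq_erase, Finset.sum_erase_eq_sub hj]
    linarith
  have hsum := Finset.sum_le_sum key
  rw [Finset.sum_sub_distrib, Finset.sum_const, nsmul_eq_mul, hTcard,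
    Nat.cast_sub (by omega)] at hsum
  have hm' : (3 : ℝ) ≤ m := by exact_mod_cast hm
  have hpos : (0 : ℝ) < (m : ℝ) - 2 := by linarith
  rw [ge_iff_le, one_div, inv_mul_le_iff₀ hpos]
  push_cast at hsum
  linarith
end

section
/- Let m ≥ 3. If the singleton partition S is the unique minimizer of Δ, i.e., Δ(S) < Δ(P) for every partition P of [m] with |P| ≥ 2 and P ≠ S, then Δ_T(S) < Δ(S) for every T ⊂ [m] with |T| = m−1. (Lemma 3.) -/
open MeasureTheory Finset

/-- `P` is a partition of `[m]` into nonempty cells. -/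
def IsPartition {m : ℕ} (P : Finset (Finset (Fin m))) : Prop :=
  (∀ A ∈ P, A.Nonempty) ∧ ∀ i : Fin m, ∃! A, A ∈ P ∧ i ∈ A

/-- The singleton partition `S = {{1},…,{m}}` of `[m]`. -/
def sPart (m : ℕ) : Finset (Finset (Fin m)) := Finset.univ.image fun i => {i}

/-- `Δ(P) = (1/(|P|−1))·[Σ_{A∈P} H(X_A) − H(X_{[m]})]`. -/
noncomputable def ΔP {m : ℕ} {Ω : Type*} [MeasurableSpace Ω] (μ : Measure Ω)
    {𝒳 : Fin m → Type*} [∀ i, Fintype (𝒳 i)] (X : ∀ i, Ω → 𝒳 i)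
    (P : Finset (Finset (Fin m))) : ℝ :=
  (1 / ((P.card : ℝ) - 1)) * (∑ A ∈ P, HX μ X A - HX μ X Finset.univ)

/-- Lemma 3: if the singleton partition is the unique minimizer of `Δ`, then
`Δ_T(S) < Δ(S)` for every `T ⊂ [m]` with `|T| = m−1`. -/
theorem stmt3 {m : ℕ} (hm : 3 ≤ m) {Ω : Type*} [MeasurableSpace Ω] (μ : Measure Ω)
    [IsProbabilityMeasure μ]
    {𝒳 : Fin m → Type*} [∀ i, Fintype (𝒳 i)] [∀ i, MeasurableSpace (𝒳 i)]
    [∀ i, MeasurableSingletonClass (𝒳 i)]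
    (X : ∀ i, Ω → 𝒳 i) (hX : ∀ i, Measurable (X i))
    (hmin : ∀ P : Finset (Finset (Fin m)), IsPartition P → 2 ≤ P.card → P ≠ sPart m →
        ΔP μ X (sPart m) < ΔP μ X P) :
    ∀ T : Finset (Fin m), T ⊂ Finset.univ → T.card = m - 1 →
      (1 / ((m : ℝ) - 2)) * (∑ i ∈ T, HX μ X {i} - HX μ X T) < ΔP μ X (sPart m) := by
  intro T hT hcard
  obtain ⟨j, hj⟩ : ∃ j, j ∉ T := by
    by_contra h
    push Not at h
    exact hT.2 (fun i _ => h i)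
  have hins : insert j T = Finset.univ := by
    apply Finset.eq_univ_of_card
    rw [Finset.card_insert_of_notMem hj, hcard, Fintype.card_fin]
    omega
  have hcase : ∀ i, i = j ∨ i ∈ T := by
    intro i
    have : i ∈ insert j T := by rw [hins]; exact Finset.mem_univ i
    simpa using this
  have hne : ({j} : Finset (Fin m)) ≠ T := by
    intro h
    exact hj (h ▸ Finset.mem_singleton_self j)
  have hTne : T.Nonempty := by
    rw [← Finset.card_pos]; omega
  have hpart : IsPartition ({{j}, T} : Finset (Finset (Fin m))) := by
    refine ⟨?_, ?_⟩
    · intro A hA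
      simp only [Finset.mem_insert, Finset.mem_singleton] at hA
      rcases hA with rfl | rfl
      · exact Finset.singleton_nonempty j
      · exact hTne
    · intro i
      rcases hcase i with rfl | hi
      · refine ⟨{i}, by simp, ?_⟩
        rintro A ⟨hA, hiA⟩
        simp only [Finset.mem_insert, Finset.mem_singleton] at hA
        rcases hA with rfl | rfl
        · rfl
        · exact absurd hiA hj
      · refine ⟨T, by simp [hi], ?_⟩
        rintro A ⟨hA, hiA⟩
        simp only [Finset.mem_insert, Finset.mem_singleton] at hA
        rcases hA with rfl | rfl
        · rw [Finset.mem_singleton] at hiA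
          subst hiA
          exact absurd hi hj
        · rfl
  have hc2 : ({{j}, T} : Finset (Finset (Fin m))).card = 2 := Finset.card_pair hne
  have hcm : (sPart m).card = m := by
    unfold sPart
    rw [Finset.card_image_of_injective _ Finset.singleton_injective, Finset.card_univ,
      Fintype.card_fin]
  have hneS : ({{j}, T} : Finset (Finset (Fin m))) ≠ sPart m := by
    intro h
    rw [h] at hc2
    omega
  have key := hmin _ hpart hc2.ge hneS
  have hsum : ∑ A ∈ sPart m, HX μ X A = HX μ X {j} + ∑ i ∈ T, HX μ X {i} := by
    unfold sPart
    rw [Finset.sum_image (fun a _ b _ h => Finset.singleton_injective h), ← hins,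
      Finset.sum_insert hj]
  have hm' : (3 : ℝ) ≤ m := by exact_mod_cast hm
  have hP : ΔP μ X {{j}, T} = HX μ X {j} + HX μ X T - HX μ X Finset.univ := by
    unfold ΔP
    rw [hc2, Finset.sum_pair hne]
    norm_num
  have hS : ((m : ℝ) - 1) * ΔP μ X (sPart m)
      = HX μ X {j} + ∑ i ∈ T, HX μ X {i} - HX μ X Finset.univ := by
    unfold ΔP
    rw [hcm, hsum]
    have : (m : ℝ) - 1 ≠ 0 := by linarith
    field_simp
  rw [hP] at key
  rw [one_div, inv_mul_lt_iff₀ (by linarith)]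
  linarith
end

section
/- Let m ≥ 3. If the singleton partition S is the unique minimizer of Δ, i.e., Δ(S) < Δ(P) for every partition P of [m] with |P| ≥ 2 and P ≠ S, then for every T ⊂ [m] with |T| = m−1 and every vector (R_i)_{i∈T} in the rate region R_T, one has H(X_T) − Σ_{i∈T} R_i < Δ(S). (Core inequality of Theorem 2: by the Gohari–Anantharam formula C([m]‖T) = H(X_T) − min_{R∈R_T} Σ_i R_i, this says that the secret key capacity achievable with terminal [m]\T silent is strictly smaller than the unconstrained capacity Δ(S), so omnivocal communication is necessary.) -/
open MeasureTheory Finset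

/-- Core inequality of Theorem 2: if the singleton partition is the unique minimizer
of `Δ`, then for every `T ⊂ [m]` with `|T| = m−1` and every point `(R_i)_{i∈T}` of the
rate region `R_T`, we have `H(X_T) − Σ_{i∈T} R_i < Δ(S)`. -/
theorem stmt4 {m : ℕ} (hm : 3 ≤ m) {Ω : Type*} [MeasurableSpace Ω] (μ : Measure Ω)
    [IsProbabilityMeasure μ]
    {𝒳 : Fin m → Type*} [∀ i, Fintype (𝒳 i)] [∀ i, MeasurableSpace (𝒳 i)]
    [∀ i, MeasurableSingletonClass (𝒳 i)]
    (X : ∀ i, Ω → 𝒳 i) (hX : ∀ i, Measurable (X i))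
    (hmin : ∀ P : Finset (Finset (Fin m)), IsPartition P → 2 ≤ P.card → P ≠ sPart m →
        ΔP μ X (sPart m) < ΔP μ X P) :
    ∀ T : Finset (Fin m), T ⊂ Finset.univ → T.card = m - 1 →
      ∀ R : Fin m → ℝ,
        (∀ A : Finset (Fin m), A ⊂ Finset.univ → (A ∩ T).Nonempty →
            ∑ i ∈ A ∩ T, R i ≥ condEnt μ X (A ∩ T) Aᶜ) →
        HX μ X T - ∑ i ∈ T, R i < ΔP μ X (sPart m) := by
  intro T hT hcard R hR
  obtain ⟨u, hu⟩ : ∃ u, Tᶜ = {u} := by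
    rw [← Finset.card_eq_one, Finset.card_compl, Fintype.card_fin]
    omega
  have hTu : T = {u}ᶜ := by rw [← hu, compl_compl]
  have huT : u ∉ T := by rw [hTu]; simp
  have hmr : (3 : ℝ) ≤ m := by exact_mod_cast hm
  have hTr : (T.card : ℝ) = m - 1 := by
    rw [hcard, Nat.cast_sub (by omega)]; simp
  -- the value of the functional at the singleton partition
  have hcS : (sPart m).card = m := by
    unfold sPart
    rw [Finset.card_image_of_injective _ Finset.singleton_injective]; simp
  have hsplit : ∑ i, HX μ X {i} = HX μ X {u} + ∑ i ∈ T, HX μ X {i} := by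
    have h := Finset.sum_add_sum_compl T (fun i => HX μ X {i})
    rw [hu, Finset.sum_singleton] at h
    linarith
  have hS : ((m : ℝ) - 1) * ΔP μ X (sPart m)
      = HX μ X {u} + ∑ i ∈ T, HX μ X {i} - HX μ X Finset.univ := by
    have hsum : ∑ A ∈ sPart m, HX μ X A = ∑ i, HX μ X {i} := by
      unfold sPart
      rw [Finset.sum_image (fun a _ b _ h => Finset.singleton_injective h)]
    unfold ΔP
    rw [hcS, hsum, hsplit]
    have : (m : ℝ) - 1 ≠ 0 := by linarith
    field_simp
  -- the two-cell partition
  have hne : ({u} : Finset (Fin m)) ≠ T := by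
    intro h; apply huT; rw [← h]; simp
  have hc2 : ({{u}, T} : Finset (Finset (Fin m))).card = 2 := Finset.card_pair hne
  have hP : ΔP μ X (sPart m) < ΔP μ X {{u}, T} := by
    apply hmin
    · constructor
      · intro A hA
        simp only [Finset.mem_insert, Finset.mem_singleton] at hA
        rcases hA with rfl | rfl
        · simp
        · rw [← Finset.card_pos]; omega
      · intro i
        by_cases hi : i = u
        · refine ⟨{u}, by simp [hi], ?_⟩
          rintro A ⟨hA, hiA⟩
          simp only [Finset.mem_insert, Finset.mem_singleton] at hA
          rcases hA with rfl | rfl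
          · rfl
          · exact absurd (hi ▸ hiA) huT
        · refine ⟨T, ⟨by simp, by rw [hTu]; simpa using hi⟩, ?_⟩
          rintro A ⟨hA, hiA⟩
          simp only [Finset.mem_insert, Finset.mem_singleton] at hA
          rcases hA with rfl | rfl
          · exact absurd (by simpa using hiA) hi
          · rfl
    · omega
    · intro h
      rw [h] at hc2
      omega
  have hP2 : ΔP μ X {{u}, T} = HX μ X {u} + HX μ X T - HX μ X Finset.univ := by
    unfold ΔP
    rw [hc2, Finset.sum_pair hne]
    norm_num
  -- the rate constraints for the complements of singletons
  have hRi : ∀ i ∈ T, ∑ j ∈ T, R j - R i ≥ HX μ X T - HX μ X {i} := by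
    intro i hi
    have hA : ({i}ᶜ : Finset (Fin m)) ∩ T = T.erase i := by
      ext j; simp
    have h := hR {i}ᶜ (by
      rw [Finset.ssubset_univ_iff]
      intro h
      have : i ∈ ({i}ᶜ : Finset (Fin m)) := h ▸ Finset.mem_univ i
      simp at this) (by
      rw [hA, ← Finset.card_pos, Finset.card_erase_of_mem hi]; omega)
    unfold condEnt at h
    have hU : T.erase i ∪ {i} = T := by
      ext j
      simp only [Finset.mem_union, Finset.mem_erase, Finset.mem_singleton]
      by_cases hj : j = i
      · simp [hj, hi]
      · simp [hj]
    rw [hA, compl_compl, hU] at h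
    have := Finset.sum_erase_add T R hi
    linarith
  have hsumR := Finset.sum_le_sum hRi
  simp only [Finset.sum_sub_distrib, Finset.sum_const, nsmul_eq_mul, hTr] at hsumR
  rw [hP2] at hP
  by_contra hcon
  have hcon := not_lt.mp hcon
  have hmul := mul_le_mul_of_nonneg_left hcon (show (0 : ℝ) ≤ (m : ℝ) - 2 by linarith)
  linarith
end

section
/- Let m ≥ 3 and let Ω = {B ⊂ [m] : 1 ≤ |B| ≤ m−2}. The singleton partition S satisfies Δ(S) ≤ Δ(P) for every partition P of [m] with |P| ≥ 2 if and only if Δ(S) ≤ Δ(P_B) for every B ∈ Ω. (Proposition 1(a).) -/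
open MeasureTheory Finset

/-- For nonempty `B ⊊ [m]`, the partition `P_B` consisting of the cell `Bᶜ`
together with the singleton cells `{b}`, `b ∈ B`. -/
def partB {m : ℕ} (B : Finset (Fin m)) : Finset (Finset (Fin m)) :=
  insert Bᶜ (B.image fun b => ({b} : Finset (Fin m)))

lemma sum_cells {m : ℕ} {P : Finset (Finset (Fin m))} (hP : IsPartition P) (f : Fin m → ℝ) :
    ∑ A ∈ P, ∑ i ∈ A, f i = ∑ i, f i := by
  have hd : Set.PairwiseDisjoint (P : Set (Finset (Fin m))) id := by
    intro A hA C hC hne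
    refine Finset.disjoint_left.2 fun i hi hi' => hne ?_
    exact (hP.2 i).unique ⟨hA, hi⟩ ⟨hC, hi'⟩
  have hu : P.biUnion id = Finset.univ := by
    ext i
    obtain ⟨A, hA, -⟩ := hP.2 i
    simp only [Finset.mem_biUnion, Finset.mem_univ, iff_true]
    exact ⟨A, hA⟩
  rw [← hu, Finset.sum_biUnion hd]
  rfl

lemma compl_notMem {m : ℕ} (B : Finset (Fin m)) (hB : B.card ≤ m - 2) (hm : 3 ≤ m) :
    Bᶜ ∉ B.image fun b => ({b} : Finset (Fin m)) := by
  intro h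
  obtain ⟨b, hb, h⟩ := Finset.mem_image.1 h
  have := congrArg Finset.card h
  rw [Finset.card_compl, Fintype.card_fin, Finset.card_singleton] at this
  omega

lemma card_partB {m : ℕ} (B : Finset (Fin m)) (hB : B.card ≤ m - 2) (hm : 3 ≤ m) :
    (partB B).card = B.card + 1 := by
  rw [partB, Finset.card_insert_of_notMem (compl_notMem B hB hm),
    Finset.card_image_of_injective _ Finset.singleton_injective]

lemma sum_partB {m : ℕ} (B : Finset (Fin m)) (hB : B.card ≤ m - 2) (hm : 3 ≤ m)
    (h : Finset (Fin m) → ℝ) :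
    ∑ A ∈ partB B, h A = h Bᶜ + ∑ b ∈ B, h {b} := by
  rw [partB, Finset.sum_insert (compl_notMem B hB hm),
    Finset.sum_image (Finset.singleton_injective.injOn)]

lemma isPartition_partB {m : ℕ} (B : Finset (Fin m)) (hB : B.card ≤ m - 2) (hm : 3 ≤ m) :
    IsPartition (partB B) := by
  constructor
  · intro A hA
    rcases Finset.mem_insert.1 hA with rfl | hA
    · rw [← Finset.card_pos, Finset.card_compl, Fintype.card_fin]
      omega
    · obtain ⟨b, hb, rfl⟩ := Finset.mem_image.1 hA
      exact Finset.singleton_nonempty b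
  · intro i
    by_cases hi : i ∈ B
    · refine ⟨{i}, ⟨?_, Finset.mem_singleton_self i⟩, ?_⟩
      · exact Finset.mem_insert_of_mem (Finset.mem_image.2 ⟨i, hi, rfl⟩)
      · rintro A ⟨hA, hiA⟩
        rcases Finset.mem_insert.1 hA with rfl | hA
        · exact absurd hi (Finset.mem_compl.1 hiA)
        · obtain ⟨b, hb, rfl⟩ := Finset.mem_image.1 hA
          rw [Finset.mem_singleton.1 hiA]
    · refine ⟨Bᶜ, ⟨Finset.mem_insert_self _ _, Finset.mem_compl.2 hi⟩, ?_⟩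
      rintro A ⟨hA, hiA⟩
      rcases Finset.mem_insert.1 hA with rfl | hA
      · rfl
      · obtain ⟨b, hb, rfl⟩ := Finset.mem_image.1 hA
        rw [Finset.mem_singleton.1 hiA] at hi
        exact absurd hb hi

/-- Proposition 1(a): `S` is a minimizer of `Δ` over all partitions of `[m]` with at
least two cells iff `Δ(S) ≤ Δ(P_B)` for all `B` with `1 ≤ |B| ≤ m−2`. -/
theorem stmt8 {m : ℕ} (hm : 3 ≤ m) {Ω : Type*} [MeasurableSpace Ω] (μ : Measure Ω)
    [IsProbabilityMeasure μ]
    {𝒳 : Fin m → Type*} [∀ i, Fintype (𝒳 i)] [∀ i, MeasurableSpace (𝒳 i)]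
    [∀ i, MeasurableSingletonClass (𝒳 i)]
    (X : ∀ i, Ω → 𝒳 i) (hX : ∀ i, Measurable (X i)) :
    (∀ P : Finset (Finset (Fin m)), IsPartition P → 2 ≤ P.card →
        ΔP μ X (sPart m) ≤ ΔP μ X P)
      ↔ (∀ B : Finset (Fin m), 1 ≤ B.card → B.card ≤ m - 2 →
          ΔP μ X (sPart m) ≤ ΔP μ X (partB B)) := by
  constructor
  · intro h B h1 h2
    exact h _ (isPartition_partB B h2 hm) (by rw [card_partB B h2 hm]; omega)
  intro h P hP hk
  have hm' : (3 : ℝ) ≤ m := by exact_mod_cast hm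
  have hk' : (2 : ℝ) ≤ P.card := by exact_mod_cast hk
  obtain ⟨δ, hδ⟩ : ∃ δ, δ = ΔP μ X (sPart m) := ⟨_, rfl⟩
  have hS : ∑ i, HX μ X {i} - HX μ X Finset.univ = (m - 1) * δ := by
    rw [hδ, ΔP, sPart, Finset.card_image_of_injective _ Finset.singleton_injective,
      Finset.sum_image (Finset.singleton_injective.injOn), Finset.card_univ, Fintype.card_fin]
    have : (m : ℝ) - 1 ≠ 0 := by linarith
    field_simp
  have key : ∀ A ∈ P, ∑ i ∈ A, HX μ X {i} - ((∑ i ∈ A, (1 : ℝ)) - 1) * δ ≤ HX μ X A := by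
    intro A hA
    have hApos := (hP.1 A hA).card_pos
    by_cases hA1 : A.card = 1
    · obtain ⟨a, rfl⟩ := Finset.card_eq_one.1 hA1
      simp
    have hne : A ≠ Finset.univ := by
      rintro rfl
      obtain ⟨C, hC, hCA⟩ := Finset.exists_mem_ne (by omega : 1 < P.card) Finset.univ
      obtain ⟨i, hi⟩ := hP.1 C hC
      exact hCA ((hP.2 i).unique ⟨hC, hi⟩ ⟨hA, Finset.mem_univ i⟩)
    have hlt : A.card < m := by
      have := Finset.card_lt_univ_of_notMem (s := A) (x := (by
        exact (not_forall.1 (fun hh => hne (Finset.eq_univ_iff_forall.2 hh))).choose))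
        (not_forall.1 (fun hh => hne (Finset.eq_univ_iff_forall.2 hh))).choose_spec
      simpa using this
    have hc : Aᶜ.card = m - A.card := by rw [Finset.card_compl, Fintype.card_fin]
    have h2 : Aᶜ.card ≤ m - 2 := by omega
    have := h Aᶜ (by omega) h2
    rw [← hδ, ΔP, card_partB _ h2 hm, sum_partB _ h2 hm, compl_compl, hc, one_div,
      inv_mul_eq_div] at this
    push_cast [hlt.le] at this
    have hlt' : (A.card : ℝ) < m := by exact_mod_cast hlt
    rw [le_div_iff₀ (by linarith)] at this
    have hsum := Finset.sum_add_sum_compl A (fun i => HX μ X {i})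
    simp only [Finset.sum_const, nsmul_eq_mul, mul_one]
    linarith
  have hsum := Finset.sum_le_sum key
  rw [Finset.sum_sub_distrib, ← Finset.sum_mul, Finset.sum_sub_distrib, sum_cells hP,
    sum_cells hP] at hsum
  simp only [Finset.sum_const, nsmul_eq_mul, mul_one, Finset.card_univ, Fintype.card_fin] at hsum
  rw [← hδ, ΔP, one_div, inv_mul_eq_div, le_div_iff₀ (by linarith)]
  linarith
end

section
/- Let m ≥ 3 and suppose X_1,…,X_m are isentropic. Then the singleton partition S is a minimizer: Δ(S) ≤ Δ(P) for every partition P of [m] with |P| ≥ 2. (Corollary 1 of Section IV.) -/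
open MeasureTheory Finset

lemma marg {Ω : Type*} [MeasurableSpace Ω] (μ : Measure Ω) [IsProbabilityMeasure μ]
    {S T : Type*} [Fintype T] [MeasurableSpace S] [MeasurableSpace T]
    [MeasurableSingletonClass S] [MeasurableSingletonClass T]
    (Y : Ω → S) (Z : Ω → T) (hY : Measurable Y) (hZ : Measurable Z) (s : S) :
    (μ (Y ⁻¹' {s})).toReal = ∑ t, (μ ((fun ω => (Y ω, Z ω)) ⁻¹' {(s, t)})).toReal := by
  have h1 : Y ⁻¹' {s} = ⋃ t ∈ (Finset.univ : Finset T), ((fun ω => (Y ω, Z ω)) ⁻¹' {(s, t)}) := by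
    ext ω; simp
  have h2 := measureReal_biUnion_finset (μ := μ) (s := (Finset.univ : Finset T))
    (f := fun t => ((fun ω => (Y ω, Z ω)) ⁻¹' {(s, t)})) (by
      intro a _ b _ hab
      refine Set.disjoint_left.2 ?_
      intro ω h1 h2
      simp at h1 h2
      exact hab (h1.2.symm.trans h2.2)) (by
      intro b _
      exact (hY.prodMk hZ) (measurableSet_singleton _))
  rw [← h1] at h2
  exact h2

lemma term_ineq (p a b c : ℝ) (hp : 0 ≤ p) (ha : p ≤ a) (hb : p ≤ b) (hac : a ≤ c) :
    p - a * b / c ≤ p * Real.log p + p * Real.log c - p * Real.log a - p * Real.log b := by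
  rcases hp.eq_or_lt with h | h
  · subst h
    have : 0 ≤ a * b / c := by
      have : 0 ≤ c := by linarith
      positivity
    simpa using this
  · have ha' : 0 < a := by linarith
    have hb' : 0 < b := by linarith
    have hc' : 0 < c := by linarith
    have h1 := Real.log_le_sub_one_of_pos (x := a * b / (p * c)) (by positivity)
    rw [Real.log_div (by positivity) (by positivity), Real.log_mul ha'.ne' hb'.ne',
      Real.log_mul h.ne' hc'.ne'] at h1
    have h2 := mul_le_mul_of_nonneg_left h1 h.le
    have h3 : p * (a * b / (p * c) - 1) = a * b / c - p := by field_simp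
    rw [h3] at h2
    linarith

lemma submod_fin {S T U : Type*} [Fintype S] [Fintype T] [Fintype U]
    (p : S → T → U → ℝ) (a : S → T → ℝ) (b : S → U → ℝ) (c : S → ℝ)
    (hp : ∀ s t u, 0 ≤ p s t u) (ha : ∀ s t, a s t = ∑ u, p s t u)
    (hb : ∀ s u, b s u = ∑ t, p s t u) (hca : ∀ s, c s = ∑ t, a s t)
    (hcb : ∀ s, c s = ∑ u, b s u) :
    (∑ s, ∑ t, ∑ u, Real.negMulLog (p s t u)) + ∑ s, Real.negMulLog (c s) ≤
      (∑ s, ∑ t, Real.negMulLog (a s t)) + ∑ s, ∑ u, Real.negMulLog (b s u) := by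
  have ha0 : ∀ s t, 0 ≤ a s t := fun s t => by
    rw [ha]; exact Finset.sum_nonneg fun u _ => hp s t u
  rw [← Finset.sum_add_distrib, ← Finset.sum_add_distrib]
  refine Finset.sum_le_sum fun s _ => ?_
  have key : ∑ t, ∑ u, (p s t u - a s t * b s u / c s) ≤
      ∑ t, ∑ u, (p s t u * Real.log (p s t u) + p s t u * Real.log (c s)
        - p s t u * Real.log (a s t) - p s t u * Real.log (b s u)) := by
    refine Finset.sum_le_sum fun t _ => Finset.sum_le_sum fun u _ => ?_
    refine term_ineq _ _ _ _ (hp s t u) ?_ ?_ ?_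
    · rw [ha]; exact Finset.single_le_sum (fun u _ => hp s t u) (Finset.mem_univ u)
    · rw [hb]
      exact Finset.single_le_sum (f := fun t => p s t u) (fun t _ => hp s t u) (Finset.mem_univ t)
    · rw [hca]; exact Finset.single_le_sum (fun t _ => ha0 s t) (Finset.mem_univ t)
  have l0 : ∑ t, ∑ u, (p s t u - a s t * b s u / c s) = 0 := by
    simp only [Finset.sum_sub_distrib, ← ha, ← Finset.sum_div, ← Finset.mul_sum, ← Finset.sum_mul,
      ← hca, ← hcb]
    by_cases h : c s = 0
    · simp [h]
    · field_simp; simp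
  have e1 : ∑ t, ∑ u, p s t u * Real.log (c s) = c s * Real.log (c s) := by
    simp only [← Finset.sum_mul, ← ha, ← hca]
  have e2 : ∑ t, ∑ u, p s t u * Real.log (a s t) = ∑ t, a s t * Real.log (a s t) := by
    simp only [← Finset.sum_mul, ← ha]
  have e3 : ∑ t, ∑ u, p s t u * Real.log (b s u) = ∑ u, b s u * Real.log (b s u) := by
    rw [Finset.sum_comm]
    simp only [← Finset.sum_mul, ← hb]
  rw [l0] at key
  simp only [Finset.sum_sub_distrib, Finset.sum_add_distrib, e1, e2, e3] at key
  simp only [Real.negMulLog, neg_mul, Finset.sum_neg_distrib]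
  linarith

lemma ent_equiv {Ω : Type*} [MeasurableSpace Ω] (μ : Measure Ω)
    {S S' : Type*} [Fintype S] [Fintype S'] (Y : Ω → S) (Z : Ω → S') (e : S ≃ S')
    (h : ∀ ω, Z ω = e (Y ω)) :
    shannonEntropy μ Z = shannonEntropy μ Y := by
  unfold shannonEntropy
  rw [← e.sum_comp]
  refine Finset.sum_congr rfl fun s _ => ?_
  have : Z ⁻¹' {e s} = Y ⁻¹' {s} := by ext ω; simp [h]
  rw [this]

lemma submod_rv {Ω : Type*} [MeasurableSpace Ω] (μ : Measure Ω) [IsProbabilityMeasure μ]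
    {S T U : Type*} [Fintype S] [Fintype T] [Fintype U]
    [MeasurableSpace S] [MeasurableSpace T] [MeasurableSpace U]
    [MeasurableSingletonClass S] [MeasurableSingletonClass T] [MeasurableSingletonClass U]
    (Y : Ω → S) (Z : Ω → T) (W : Ω → U)
    (hY : Measurable Y) (hZ : Measurable Z) (hW : Measurable W) :
    shannonEntropy μ (fun ω => ((Y ω, Z ω), W ω)) + shannonEntropy μ Y ≤
      shannonEntropy μ (fun ω => (Y ω, Z ω)) + shannonEntropy μ (fun ω => (Y ω, W ω)) := by
  have := submod_fin
    (fun s t u => (μ ((fun ω => ((Y ω, Z ω), W ω)) ⁻¹' {((s, t), u)})).toReal)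
    (fun s t => (μ ((fun ω => (Y ω, Z ω)) ⁻¹' {(s, t)})).toReal)
    (fun s u => (μ ((fun ω => (Y ω, W ω)) ⁻¹' {(s, u)})).toReal)
    (fun s => (μ (Y ⁻¹' {s})).toReal)
    (fun _ _ _ => ENNReal.toReal_nonneg)
    (fun s t => marg μ _ W (hY.prodMk hZ) hW (s, t))
    (fun s u => by
      rw [marg μ _ Z (hY.prodMk hW) hZ (s, u)]
      refine Finset.sum_congr rfl fun t _ => ?_
      congr 2
      ext ω; simp; tauto)
    (fun s => marg μ Y Z hY hZ s)
    (fun s => marg μ Y W hY hW s)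
  unfold shannonEntropy
  simpa only [Fintype.sum_prod_type] using this

section
variable {m : ℕ} {Ω : Type*} [MeasurableSpace Ω] (μ : Measure Ω)
    {𝒳 : Fin m → Type*} [∀ i, Fintype (𝒳 i)] (X : ∀ i, Ω → 𝒳 i)

lemma HX_union (A B : Finset (Fin m)) (h : Disjoint A B) :
    HX μ X (A ∪ B) = shannonEntropy μ
      (fun ω => ((fun i : A => X i ω), (fun i : B => X i ω))) := by
  unfold HX
  refine ent_equiv μ _ _ (Equiv.piFinsetUnion 𝒳 h) fun ω => ?_
  rw [← Equiv.symm_apply_eq]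
  rfl

lemma HX_union3 (A B C : Finset (Fin m)) (h : Disjoint A B) (h' : Disjoint (A ∪ B) C) :
    HX μ X ((A ∪ B) ∪ C) = shannonEntropy μ
      (fun ω => (((fun i : A => X i ω), (fun i : B => X i ω)), (fun i : C => X i ω))) := by
  rw [HX_union μ X _ _ h']
  refine ent_equiv μ _ _ ((Equiv.piFinsetUnion 𝒳 h).prodCongr (Equiv.refl _)) fun ω => ?_
  rw [← Equiv.symm_apply_eq]
  rfl

lemma HX_submod [IsProbabilityMeasure μ] [∀ i, MeasurableSpace (𝒳 i)]
    [∀ i, MeasurableSingletonClass (𝒳 i)] (hX : ∀ i, Measurable (X i))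
    (A B C : Finset (Fin m)) (h : Disjoint A B) (h' : Disjoint (A ∪ B) C) :
    HX μ X ((A ∪ B) ∪ C) + HX μ X A ≤ HX μ X (A ∪ B) + HX μ X (A ∪ C) := by
  rw [HX_union3 μ X A B C h h', HX_union μ X A B h,
    HX_union μ X A C (h'.mono_left Finset.subset_union_left)]
  exact submod_rv μ _ _ _ (measurable_pi_lambda _ fun i => hX i)
    (measurable_pi_lambda _ fun i => hX i) (measurable_pi_lambda _ fun i => hX i)
end

lemma chord (h : ℕ → ℝ) (m : ℕ)
    (hc : ∀ k, 1 ≤ k → k + 2 ≤ m → h (k + 2) + h k ≤ 2 * h (k + 1)) (a : ℕ) (ha : 1 ≤ a)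
    (ham : a ≤ m) : ((a : ℝ) - 1) * (h m - h 1) ≤ ((m : ℝ) - 1) * (h a - h 1) := by
  have i1 : ∀ a, 1 ≤ a → a + 1 ≤ m → ((a : ℝ) - 1) * (h (a + 1) - h a) ≤ h a - h 1 := by
    intro a ha
    induction a, ha using Nat.le_induction with
    | base => simp
    | succ k hk ih =>
      intro hkm
      have := ih (by omega)
      have h2 := hc k hk (by omega)
      have hk0 : (0 : ℝ) ≤ k := by positivity
      have h3 := mul_le_mul_of_nonneg_left h2 hk0
      push_cast
      rw [show k + 1 + 1 = k + 2 from rfl]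
      linarith
  rcases ha.eq_or_lt with h1 | h1
  · subst h1; simp
  · have i2 : ∀ b, a ≤ b → b ≤ m → ((a : ℝ) - 1) * (h b - h 1) ≤ ((b : ℝ) - 1) * (h a - h 1) := by
      intro b hb
      induction b, hb using Nat.le_induction with
      | base => simp
      | succ b hb ih =>
        intro hbm
        have q := ih (by omega)
        have r := i1 b (by omega) hbm
        have hb1 : (0 : ℝ) < (b : ℝ) - 1 := by
          have : (1 : ℝ) < b := by exact_mod_cast (by omega : 1 < b)
          linarith
        have ha1 : (0 : ℝ) ≤ (a : ℝ) - 1 := by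
          have : (1 : ℝ) ≤ a := by exact_mod_cast ha
          linarith
        have hb0 : (0 : ℝ) ≤ b := by positivity
        have r' := mul_le_mul_of_nonneg_left r ha1
        have q' := mul_le_mul_of_nonneg_left q hb0
        push_cast
        refine le_of_mul_le_mul_left ?_ hb1
        linarith
    exact i2 m ham le_rfl


/-- Corollary 1 of Section IV: if `X_1,…,X_m` are isentropic, then the singleton
partition is a minimizer of `Δ`. -/
theorem stmt11 {m : ℕ} (hm : 3 ≤ m) {Ω : Type*} [MeasurableSpace Ω] (μ : Measure Ω)
    [IsProbabilityMeasure μ]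
    {𝒳 : Fin m → Type*} [∀ i, Fintype (𝒳 i)] [∀ i, MeasurableSpace (𝒳 i)]
    [∀ i, MeasurableSingletonClass (𝒳 i)]
    (X : ∀ i, Ω → 𝒳 i) (hX : ∀ i, Measurable (X i))
    (hiso : ∀ A B : Finset (Fin m), A.Nonempty → B.Nonempty → A.card = B.card →
        HX μ X A = HX μ X B) :
    ∀ P : Finset (Finset (Fin m)), IsPartition P → 2 ≤ P.card →
      ΔP μ X (sPart m) ≤ ΔP μ X P := by
  intro P hP hcard
  obtain ⟨hne, hex⟩ := hP
  set h : ℕ → ℝ := fun k => HX μ X (Finset.univ.filter fun i : Fin m => i.val < k) with hh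
  have hcardk : ∀ k, k ≤ m → (Finset.univ.filter fun i : Fin m => i.val < k).card = k := by
    intro k hk
    rw [Fin.card_filter_val_lt]
    omega
  have hH : ∀ A : Finset (Fin m), A.Nonempty → HX μ X A = h A.card := by
    intro A hA
    have hc := hcardk A.card (by simpa using Finset.card_le_univ A)
    refine hiso _ _ hA ?_ hc.symm
    rw [← Finset.card_pos, hc]
    exact hA.card_pos
  have hconc : ∀ k, 1 ≤ k → k + 2 ≤ m → h (k + 2) + h k ≤ 2 * h (k + 1) := by
    intro k hk hkm
    set A := Finset.univ.filter fun i : Fin m => i.val < k with hA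
    have hAc : A.card = k := hcardk k (by omega)
    have hAne : A.Nonempty := by rw [← Finset.card_pos]; omega
    set x : Fin m := ⟨k, by omega⟩
    set y : Fin m := ⟨k + 1, by omega⟩
    have d1 : Disjoint A {x} := by simp [hA, x]
    have d2 : Disjoint A {y} := by simp [hA, y]
    have d3 : Disjoint (A ∪ {x}) {y} := by
      rw [Finset.disjoint_union_left]
      exact ⟨d2, by simp [x, y]⟩
    have := HX_submod μ X hX A {x} {y} d1 d3
    rw [hH A hAne, hH (A ∪ {x} ∪ {y}) ((hAne.mono Finset.subset_union_left).mono Finset.subset_union_left),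
      hH (A ∪ {x}) (hAne.mono (Finset.subset_union_left)),
      hH (A ∪ {y}) (hAne.mono (Finset.subset_union_left)),
      Finset.card_union_of_disjoint d3, Finset.card_union_of_disjoint d1,
      Finset.card_union_of_disjoint d2, hAc] at this
    simp only [Finset.card_singleton] at this
    rw [show k + 1 + 1 = k + 2 from rfl] at this
    linarith
  have hsum : ∑ A ∈ P, A.card = m := by
    have : ∑ A ∈ P, A.card = ∑ A ∈ P, ∑ i : Fin m, if i ∈ A then 1 else 0 := by
      refine Finset.sum_congr rfl fun A _ => ?_
      simp
    rw [this, Finset.sum_comm]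
    have : ∀ i : Fin m, (∑ A ∈ P, if i ∈ A then 1 else 0) = 1 := by
      intro i
      obtain ⟨A, ⟨hA, hiA⟩, hu⟩ := hex i
      rw [Finset.sum_eq_single A]
      · simp [hiA]
      · intro B hB hBA
        rw [if_neg]
        intro hi
        exact hBA (hu B ⟨hB, hi⟩)
      · intro h; exact absurd hA h
    simp [this]
  have hsumR : ∑ A ∈ P, (A.card : ℝ) = m := by exact_mod_cast hsum
  have hu : HX μ X Finset.univ = h m := by
    rw [hH _ ⟨⟨0, by omega⟩, Finset.mem_univ _⟩]; simp
  have hinj : Function.Injective (fun i : Fin m => ({i} : Finset (Fin m))) :=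
    Finset.singleton_injective
  have hSc : (sPart m).card = m := by
    unfold sPart
    rw [Finset.card_image_of_injective _ hinj]; simp
  have hSs : ∑ A ∈ sPart m, HX μ X A = m * h 1 := by
    unfold sPart
    rw [Finset.sum_image (fun _ _ _ _ h => hinj h)]
    rw [Finset.sum_congr rfl (fun i _ => hH {i} (Finset.singleton_nonempty i))]
    simp
  have hmain : ((P.card : ℝ) - 1) * (m * h 1 - h m) ≤
      ((m : ℝ) - 1) * (∑ A ∈ P, HX μ X A - h m) := by
    have : ∑ A ∈ P, ((A.card : ℝ) - 1) * (h m - h 1) ≤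
        ∑ A ∈ P, ((m : ℝ) - 1) * (HX μ X A - h 1) := by
      refine Finset.sum_le_sum fun A hA => ?_
      rw [hH A (hne A hA)]
      exact chord h m hconc A.card (hne A hA).card_pos (by simpa using Finset.card_le_univ A)
    rw [← Finset.sum_mul, ← Finset.mul_sum, Finset.sum_sub_distrib, Finset.sum_sub_distrib,
      hsumR] at this
    simp only [Finset.sum_const, nsmul_eq_mul, mul_one] at this
    linarith
  unfold ΔP
  rw [hSc, hSs, hu]
  have hm1 : (0 : ℝ) < (m : ℝ) - 1 := by
    have : (3 : ℝ) ≤ m := by exact_mod_cast hm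
    linarith
  have hp1 : (0 : ℝ) < (P.card : ℝ) - 1 := by
    have : (2 : ℝ) ≤ P.card := by exact_mod_cast hcard
    linarith
  rw [one_div_mul_eq_div, one_div_mul_eq_div, div_le_div_iff₀ hm1 hp1]
  linarith
end

section
/- In the PIN model on a finite simple graph G = ([m], E): for every partition P of [m] with |P| ≥ 2, Δ(P) = |E(P)| / (|P|−1), where Δ(P) := (1/(|P|−1))·[Σ_{A∈P} H(X_A) − H(X_{[m]})] with entropies in bits, and |E(P)| is the number of edges of G whose two endpoints lie in different cells of P. -/
open MeasureTheory Finset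

/-- Shannon entropy in bits (base-2 logarithm) of a random variable with values
in a finite set. -/
noncomputable def shannonEntropy2 {Ω : Type*} [MeasurableSpace Ω] (μ : Measure Ω)
    {S : Type*} [Fintype S] (Y : Ω → S) : ℝ :=
  -∑ s : S, (μ (Y ⁻¹' {s})).toReal * Real.logb 2 (μ (Y ⁻¹' {s})).toReal

/-- `HX2 μ X A` is the Shannon entropy (in bits) of the tuple `X_A = (X_i : i ∈ A)`. -/
noncomputable def HX2 {m : ℕ} {Ω : Type*} [MeasurableSpace Ω] (μ : Measure Ω)
    {𝒳 : Fin m → Type*} [∀ i, Fintype (𝒳 i)] (X : ∀ i, Ω → 𝒳 i)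
    (A : Finset (Fin m)) : ℝ :=
  shannonEntropy2 μ (fun ω => fun i : A => X i ω)

/-- `Δ(P) = (1/(|P|−1))·[Σ_{A∈P} H(X_A) − H(X_{[m]})]`, entropies in bits. -/
noncomputable def ΔP2 {m : ℕ} {Ω : Type*} [MeasurableSpace Ω] (μ : Measure Ω)
    {𝒳 : Fin m → Type*} [∀ i, Fintype (𝒳 i)] (X : ∀ i, Ω → 𝒳 i)
    (P : Finset (Finset (Fin m))) : ℝ :=
  (1 / ((P.card : ℝ) - 1)) * (∑ A ∈ P, HX2 μ X A - HX2 μ X Finset.univ)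

open Classical in
/-- `E(P)`: the edges of `G` whose two endpoints lie in different cells of `P`. -/
noncomputable def crossEdges {m : ℕ} (G : SimpleGraph (Fin m)) [DecidableRel G.Adj]
    (P : Finset (Finset (Fin m))) : Finset (Sym2 (Fin m)) :=
  G.edgeFinset.filter fun e => ¬ ∃ A ∈ P, ∀ v ∈ e, v ∈ A

/-- The PIN-model random variable of terminal `i`: the tuple `(ξ_e : e ∈ E, i ∈ e)`. -/
def pinX {m : ℕ} {Ω : Type*} (G : SimpleGraph (Fin m)) [DecidableRel G.Adj]
    (ξ : Ω → G.edgeFinset → Bool) (i : Fin m) (ω : Ω) :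
    {e : Sym2 (Fin m) // e ∈ G.edgeFinset ∧ i ∈ e} → Bool :=
  fun e => ξ ω ⟨e.1, e.2.1⟩

theorem aux_entropy_comp {Ω : Type*} [MeasurableSpace Ω] (μ : Measure Ω)
    {S T : Type*} [Fintype S] [Fintype T] (Y : Ω → S) (g : S → T) (hg : Function.Injective g) :
    shannonEntropy2 μ (fun ω => g (Y ω)) = shannonEntropy2 μ Y := by
  classical
  unfold shannonEntropy2
  congr 1
  symm
  rw [← Finset.sum_subset (Finset.subset_univ (Finset.univ.image g))]
  · rw [Finset.sum_image (fun a _ b _ h => hg h)]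
    refine Finset.sum_congr rfl fun s _ => ?_
    have : (fun ω => g (Y ω)) ⁻¹' {g s} = Y ⁻¹' {s} := by
      ext ω; simp [hg.eq_iff]
    rw [this]
  · intro t _ ht
    have : (fun ω => g (Y ω)) ⁻¹' {t} = ∅ := by
      ext ω
      simp only [Set.mem_preimage, Set.mem_singleton_iff, Set.mem_empty_iff_false, iff_false]
      rintro rfl
      exact ht (Finset.mem_image_of_mem _ (Finset.mem_univ _))
    rw [this]; simp

theorem aux_card {E : Type*} [Fintype E] [DecidableEq E] (p : E → Prop) [DecidablePred p]
    (s : {e // p e} → Bool)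
    [Fintype ↥((fun f : E → Bool => fun e : {e // p e} => f e) ⁻¹' {s})] :
    Fintype.card ↥((fun f : E → Bool => fun e : {e // p e} => f e) ⁻¹' {s})
      = 2 ^ Fintype.card {e // ¬ p e} := by
  have e1 : ↥((fun f : E → Bool => fun e : {e // p e} => f e) ⁻¹' {s}) ≃
      ({e // ¬ p e} → Bool) :=
    { toFun := fun f e => f.1 e
      invFun := fun h => ⟨fun e => if he : p e then s ⟨e, he⟩ else h ⟨e, he⟩, by
        simp only [Set.mem_preimage, Set.mem_singleton_iff]
        ext e
        simp [e.2]⟩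
      left_inv := by
        rintro ⟨f, hf⟩
        simp only [Set.mem_preimage, Set.mem_singleton_iff] at hf
        ext e
        subst hf
        simp
      right_inv := by
        intro h
        ext e
        simp [e.2] }
  rw [Fintype.card_congr e1]
  simp

theorem aux_entropy_restrict {Ω : Type*} [MeasurableSpace Ω] (μ : Measure Ω)
    {E : Type*} [Fintype E] [DecidableEq E] (ξ : Ω → E → Bool) (hm : Measurable ξ)
    (hξ : Measure.map ξ μ = (PMF.uniformOfFintype (E → Bool)).toMeasure)
    (p : E → Prop) [DecidablePred p] :
    shannonEntropy2 μ (fun ω => fun e : {e // p e} => ξ ω e) = Fintype.card {e // p e} := by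
  classical
  have key : ∀ s : {e // p e} → Bool,
      (μ ((fun ω => fun e : {e // p e} => ξ ω e) ⁻¹' {s})).toReal
        = ((2 : ℝ) ^ Fintype.card {e // p e})⁻¹ := by
    intro s
    have hset : MeasurableSet ((fun f : E → Bool => fun e : {e // p e} => f e) ⁻¹' {s}) :=
      (Set.toFinite _).measurableSet
    have h1 : (fun ω => fun e : {e // p e} => ξ ω e) ⁻¹' {s}
        = ξ ⁻¹' ((fun f : E → Bool => fun e : {e // p e} => f e) ⁻¹' {s}) := rfl
    rw [h1, ← Measure.map_apply hm hset, hξ, PMF.toMeasure_uniformOfFintype_apply _ hset,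
      aux_card p s]
    have h2 : Fintype.card (E → Bool)
        = 2 ^ Fintype.card {e // p e} * 2 ^ Fintype.card {e // ¬ p e} := by
      rw [← pow_add, Fintype.card_fun, Fintype.card_bool]
      congr 1
      rw [Fintype.card_subtype_compl]
      have := Fintype.card_subtype_le p
      omega
    rw [h2]
    simp only [ENNReal.toReal_div, ENNReal.toReal_natCast]
    push_cast
    field_simp
  unfold shannonEntropy2
  rw [Finset.sum_congr rfl fun s _ => by rw [key s]]
  rw [Finset.sum_const, Finset.card_univ, Fintype.card_fun, Fintype.card_bool, Real.logb_inv,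
    Real.logb_pow, Real.logb_self_eq_one (by norm_num)]
  simp only [nsmul_eq_mul]
  push_cast
  field_simp

open Classical in
theorem aux_HX_s14 {m : ℕ} {Ω : Type*} [MeasurableSpace Ω] (μ : Measure Ω)
    (G : SimpleGraph (Fin m)) [DecidableRel G.Adj]
    (ξ : Ω → G.edgeFinset → Bool) (hξmeas : Measurable ξ)
    (hξ : Measure.map ξ μ = (PMF.uniformOfFintype (G.edgeFinset → Bool)).toMeasure)
    [∀ i : Fin m, Fintype ({e : Sym2 (Fin m) // e ∈ G.edgeFinset ∧ i ∈ e} → Bool)]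
    (A : Finset (Fin m)) :
    HX2 μ (pinX G ξ) A = ((G.edgeFinset.filter fun e => ∃ v ∈ e, v ∈ A).card : ℝ) := by
  have h := aux_entropy_restrict μ ξ hξmeas hξ (fun e => ∃ v ∈ e.1, v ∈ A)
  have hc : Fintype.card {e : G.edgeFinset // ∃ v ∈ e.1, v ∈ A}
      = (G.edgeFinset.filter fun e => ∃ v ∈ e, v ∈ A).card := by
    rw [Fintype.card_subtype, ← Finset.card_map (Function.Embedding.subtype _)]
    congr 1
    ext e
    simp [and_comm]
  rw [← hc, ← h]
  unfold HX2
  have hg : Function.Injective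
      (fun (f : {e : G.edgeFinset // ∃ v ∈ e.1, v ∈ A} → Bool) (i : A)
        (e : {e : Sym2 (Fin m) // e ∈ G.edgeFinset ∧ i.1 ∈ e}) =>
        f ⟨⟨e.1, e.2.1⟩, i.1, e.2.2, i.2⟩) := by
    intro f f' hff
    funext x
    obtain ⟨⟨e, he⟩, v, hv, hA⟩ := x
    exact congrFun (congrFun hff ⟨v, hA⟩) ⟨e, he, hv⟩
  exact @aux_entropy_comp Ω _ μ _ _ _ _
    (fun ω => fun e : {e : G.edgeFinset // ∃ v ∈ e.1, v ∈ A} => ξ ω e) _ hg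

open Classical in
theorem aux_count {m : ℕ} (P : Finset (Finset (Fin m))) (hP : IsPartition P)
    (e : Sym2 (Fin m)) :
    (P.filter fun A => ∃ v ∈ e, v ∈ A).card
      = 1 + if ¬ ∃ A ∈ P, ∀ v ∈ e, v ∈ A then 1 else 0 := by
  induction e using Sym2.ind with
  | _ a b =>
  obtain ⟨A, ⟨hA, haA⟩, hAu⟩ := hP.2 a
  obtain ⟨B, ⟨hB, hbB⟩, hBu⟩ := hP.2 b
  have hf : (P.filter fun C => ∃ v ∈ s(a, b), v ∈ C) = {A, B} := by
    ext C
    simp only [Finset.mem_filter, Sym2.mem_iff, Finset.mem_insert, Finset.mem_singleton]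
    constructor
    · rintro ⟨hC, v, rfl | rfl, hv⟩
      · exact Or.inl (hAu C ⟨hC, hv⟩)
      · exact Or.inr (hBu C ⟨hC, hv⟩)
    · rintro (rfl | rfl)
      · exact ⟨hA, a, Or.inl rfl, haA⟩
      · exact ⟨hB, b, Or.inr rfl, hbB⟩
  rw [hf]
  by_cases hAB : A = B
  · subst hAB
    rw [if_neg]
    · simp
    · push Not
      refine ⟨A, hA, fun v hv => ?_⟩
      rcases Sym2.mem_iff.1 hv with rfl | rfl <;> assumption
  · rw [if_pos, Finset.card_pair hAB]
    rintro ⟨C, hC, h⟩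
    apply hAB
    rw [← hAu C ⟨hC, h a (by simp)⟩, ← hBu C ⟨hC, h b (by simp)⟩]

/-- In the PIN model on a finite simple graph `G = ([m], E)`:
`Δ(P) = |E(P)|/(|P|−1)` for every partition `P` of `[m]` with `|P| ≥ 2`. -/
theorem stmt14 {m : ℕ} {Ω : Type*} [MeasurableSpace Ω] (μ : Measure Ω)
    [IsProbabilityMeasure μ]
    (G : SimpleGraph (Fin m)) [DecidableRel G.Adj]
    (ξ : Ω → G.edgeFinset → Bool) (hξmeas : Measurable ξ)
    (hξ : Measure.map ξ μ = (PMF.uniformOfFintype (G.edgeFinset → Bool)).toMeasure)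
    (P : Finset (Finset (Fin m))) (hP : IsPartition P) (hcard : 2 ≤ P.card) :
    ΔP2 μ (pinX G ξ) P = ((crossEdges G P).card : ℝ) / ((P.card : ℝ) - 1) := by
  classical
  have hsum : ∑ A ∈ P, HX2 μ (pinX G ξ) A
      = (G.edgeFinset.card : ℝ) + (crossEdges G P).card := by
    rw [Finset.sum_congr rfl fun A _ => aux_HX_s14 μ G ξ hξmeas hξ A, ← Nat.cast_sum, ← Nat.cast_add]
    congr 1
    have h := Finset.sum_card_bipartiteAbove_eq_sum_card_bipartiteBelow (s := P)
      (t := G.edgeFinset) (fun (A : Finset (Fin m)) (e : Sym2 (Fin m)) => ∃ v ∈ e, v ∈ A)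
    unfold Finset.bipartiteAbove Finset.bipartiteBelow at h
    rw [h, Finset.sum_congr rfl fun e _ => aux_count P hP e, Finset.sum_add_distrib,
      ← Finset.card_filter, ← Finset.card_eq_sum_ones]
    unfold crossEdges
    congr!
  have huniv : HX2 μ (pinX G ξ) Finset.univ = (G.edgeFinset.card : ℝ) := by
    rw [aux_HX_s14 μ G ξ hξmeas hξ]
    congr 2
    refine Finset.filter_true_of_mem fun e _ => ?_
    induction e using Sym2.ind with
    | _ a b => exact ⟨a, by simp, by simp⟩
  unfold ΔP2
  rw [hsum, huniv]
  ring
end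

section
/- Let m ≥ 3 and consider the complete graph K_m on vertex set [m]. For every partition P of [m] with |P| ≥ 2, one has |E(P)|/(|P|−1) ≥ m/2, with equality if and only if P is the singleton partition S. (Combinatorial form of Corollary 2/Corollary 3: since Δ(P) = |E(P)|/(|P|−1) in the complete-graph PIN model, S is the unique minimizer of Δ there.) -/
open Finset

open Classical in
/-- `|E(P)|`: the number of edges of the complete graph `K_m` whose two endpoints
lie in different cells of `P`. -/
noncomputable def crossCount {m : ℕ} (P : Finset (Finset (Fin m))) : ℕ :=
  ((⊤ : SimpleGraph (Fin m)).edgeFinset.filter fun e => ¬ ∃ A ∈ P, ∀ v ∈ e, v ∈ A).card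

open Classical in
lemma two_cross {m : ℕ} (P : Finset (Finset (Fin m))) (f : Fin m → Finset (Fin m))
    (hf : ∀ i, f i ∈ P ∧ i ∈ f i) (hu : ∀ i A, A ∈ P → i ∈ A → A = f i) :
    2 * crossCount P = ∑ i, (f i)ᶜ.card := by
  let G : SimpleGraph (Fin m) :=
    { Adj := fun i j => f i ≠ f j
      symm := ⟨fun i j h => Ne.symm h⟩
      loopless := ⟨fun i h => h rfl⟩ }
  have h1 : crossCount P = G.edgeFinset.card := by
    unfold crossCount
    congr 1
    ext e
    induction e using Sym2.ind with
    | _ i j =>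
      simp only [Finset.mem_filter, SimpleGraph.mem_edgeFinset, SimpleGraph.mem_edgeSet,
        SimpleGraph.top_adj, Sym2.mem_iff]
      change _ ↔ f i ≠ f j
      constructor
      · rintro ⟨_, h⟩ he
        apply h
        refine ⟨f i, (hf i).1, ?_⟩
        rintro v (rfl | rfl)
        · exact (hf _).2
        · rw [he]; exact (hf _).2
      · intro h
        refine ⟨fun hij => h (by rw [hij]), ?_⟩
        rintro ⟨A, hA, hv⟩
        exact h ((hu i A hA (hv i (Or.inl rfl))).symm.trans (hu j A hA (hv j (Or.inr rfl))))
  rw [h1, ← G.sum_degrees_eq_twice_card_edges]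
  refine Finset.sum_congr rfl fun i _ => ?_
  rw [← SimpleGraph.card_neighborFinset_eq_degree]
  congr 1
  ext j
  simp only [SimpleGraph.mem_neighborFinset, Finset.mem_compl]
  change f i ≠ f j ↔ _
  constructor
  · intro h hj
    exact h (hu j _ (hf i).1 hj)
  · intro h he
    apply h
    rw [he]; exact (hf j).2

/-- Combinatorial form of Corollaries 2/3: for the complete graph `K_m`, `m ≥ 3`,
every partition `P` of `[m]` with `|P| ≥ 2` satisfies `|E(P)|/(|P|−1) ≥ m/2`, with
equality iff `P` is the singleton partition. -/
theorem stmt17 {m : ℕ} (hm : 3 ≤ m) (P : Finset (Finset (Fin m)))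
    (hP : IsPartition P) (hcard : 2 ≤ P.card) :
    (crossCount P : ℝ) / ((P.card : ℝ) - 1) ≥ (m : ℝ) / 2 ∧
    ((crossCount P : ℝ) / ((P.card : ℝ) - 1) = (m : ℝ) / 2 ↔ P = sPart m) := by
  classical
  obtain ⟨hne, hex⟩ := hP
  choose f hf hu' using hex
  have hu : ∀ i A, A ∈ P → i ∈ A → A = f i := fun i A h1 h2 => hu' i A ⟨h1, h2⟩
  have h2 := two_cross P f hf hu
  have himg : ∀ i, (f i)ᶜ.image f = P.erase (f i) := by
    intro i
    ext A
    simp only [Finset.mem_image, Finset.mem_compl, Finset.mem_erase]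
    constructor
    · rintro ⟨j, hj, rfl⟩
      refine ⟨fun h => hj (h ▸ (hf j).2), (hf j).1⟩
    · rintro ⟨hA, hAP⟩
      obtain ⟨j, hj⟩ := hne A hAP
      have hAj := hu j A hAP hj
      refine ⟨j, fun hji => hA ?_, hAj.symm⟩
      rw [hAj, ← hu j _ (hf i).1 hji]
  have hce : ∀ i, (P.erase (f i)).card = P.card - 1 := fun i =>
    Finset.card_erase_of_mem (hf i).1
  have hdeg : ∀ i, P.card - 1 ≤ (f i)ᶜ.card := by
    intro i
    rw [← hce i, ← himg i]
    exact Finset.card_image_le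
  have hsum : m * (P.card - 1) = ∑ _i : Fin m, (P.card - 1) := by simp
  have hle : m * (P.card - 1) ≤ 2 * crossCount P := by
    rw [h2, hsum]
    exact Finset.sum_le_sum fun i _ => hdeg i
  have heq : 2 * crossCount P = m * (P.card - 1) ↔ P = sPart m := by
    constructor
    · intro h
      have hall : ∀ i, (f i)ᶜ.card = P.card - 1 := by
        intro i
        rw [h2, hsum] at h
        exact ((Finset.sum_eq_sum_iff_of_le fun i _ => hdeg i).1 h.symm i
          (Finset.mem_univ i)).symm
      have hsing : ∀ A ∈ P, ∀ u ∈ A, ∀ v ∈ A, u = v := by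
        intro A hA u huA v hvA
        obtain ⟨B, hB, hBA⟩ := Finset.exists_mem_ne (show 1 < P.card by omega) A
        obtain ⟨i, hi⟩ := hne B hB
        have hinj : Set.InjOn f ((f i)ᶜ : Finset (Fin m)) := by
          apply Finset.card_image_iff.1
          rw [himg, hce, hall]
        have hout : ∀ w ∈ A, w ∈ (f i)ᶜ := by
          intro w hw
          rw [Finset.mem_compl]
          intro hwi
          apply hBA
          rw [hu i B hB hi, hu w A hA hw]
          exact hu w _ (hf i).1 hwi
        apply hinj (Finset.mem_coe.2 (hout u huA)) (Finset.mem_coe.2 (hout v hvA))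
        rw [← hu u A hA huA, ← hu v A hA hvA]
      have hfs : ∀ i, f i = {i} := by
        intro i
        ext j
        rw [Finset.mem_singleton]
        constructor
        · intro hj
          exact hsing _ (hf i).1 j hj i (hf i).2
        · rintro rfl
          exact (hf _).2
      ext A
      simp only [sPart, Finset.mem_image, Finset.mem_univ, true_and]
      constructor
      · intro hA
        obtain ⟨i, hi⟩ := hne A hA
        exact ⟨i, by rw [← hfs i, ← hu i A hA hi]⟩
      · rintro ⟨i, rfl⟩
        rw [← hfs i]
        exact (hf i).1
    · intro h
      have hfs : ∀ i, f i = {i} := by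
        intro i
        refine (hu i {i} ?_ (Finset.mem_singleton_self i)).symm
        rw [h]
        exact Finset.mem_image_of_mem _ (Finset.mem_univ i)
      have hc : P.card = m := by
        rw [h, sPart, Finset.card_image_of_injective _ Finset.singleton_injective]
        simp
      rw [h2, hc]
      simp [hfs, Finset.card_compl]
  obtain ⟨k, hk⟩ : ∃ k, P.card = k + 2 := ⟨P.card - 2, by omega⟩
  rw [← heq]
  have hk1 : P.card - 1 = k + 1 := by omega
  rw [hk1] at hle ⊢
  have hkr : (P.card : ℝ) - 1 = k + 1 := by rw [hk]; push_cast; ring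
  have hpos : (0 : ℝ) < (k : ℝ) + 1 := by positivity
  rw [hkr]
  constructor
  · rw [ge_iff_le, div_le_div_iff₀ two_pos hpos]
    have : (m : ℝ) * (k + 1) ≤ 2 * crossCount P := by exact_mod_cast hle
    linarith
  · rw [div_eq_div_iff hpos.ne' two_ne_zero, mul_comm]
    norm_cast
end
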